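/- (Theorem 1, main part.) Let z(t) = (x(t), y(t)), t ∈ I, be a geodesic of the Kaluza–Klein metric g̃ with g̃_{AB}(z) ż^A ż^B = ε where ε ∈ {−1, 0, 1}, and let r := −β a(x(t))² (ẏ + β A_μ(x) ẋ^μ) be its conserved charge. Assume ε + r²/(β² a(x(t))²) > 0 for all t ∈ I and set Ω_r(x) := (ε + r²/(β² a(x)²))^{1/2} and g_r := Ω_r² g₀ (so g_r^{λα} = Ω_r^{−2} g₀^{λα}). Let τ : I → ℝ be the strictly increasing reparametrization with dτ/dt = Ω_r(x(t))², and let x̃(τ) denote x reparametrized by τ. Then x̃ satisfies the Lorentz force equation d²x̃^λ/dτ² + Γ[g_r]^λ_{μν} (dx̃^μ/dτ)(dx̃^ν/dτ) = r g_r^{λα} F_{αν} dx̃^ν/dτ for every λ, together with the normalization g_{r,μν} (dx̃^μ/dτ)(dx̃^ν/dτ) = 1. -/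

import Mathlib

open scoped BigOperators

/-- Partial derivative in the μ-th coordinate direction. -/
noncomputable def pd {ι : Type*} [Fintype ι] [DecidableEq ι] {F : Type*}
    [NormedAddCommGroup F] [NormedSpace ℝ F]
    (f : (ι → ℝ) → F) (μ : ι) (x : ι → ℝ) : F :=
  fderiv ℝ f x (Pi.single μ 1)

/-- Christoffel symbols Γ[h]^l_{μν} of a matrix field `h`. -/
noncomputable def Chr {ι : Type*} [Fintype ι] [DecidableEq ι]
    (h : (ι → ℝ) → Matrix ι ι ℝ) (l μ ν : ι) (x : ι → ℝ) : ℝ :=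
  (1/2) * ∑ ρ : ι, (h x)⁻¹ l ρ *
    (pd (fun z => h z ρ ν) μ x + pd (fun z => h z ρ μ) ν x - pd (fun z => h z μ ν) ρ x)

/-- A curve `z` is a geodesic of the metric `h` on the parameter set `I`. -/
def IsGeodesicOn {ι : Type*} [Fintype ι] [DecidableEq ι]
    (h : (ι → ℝ) → Matrix ι ι ℝ) (z : ℝ → ι → ℝ) (I : Set ℝ) : Prop :=
  ∀ t ∈ I, ∀ A : ι,
    deriv (fun s => deriv (fun u => z u A) s) t
      + ∑ B : ι, ∑ C : ι, Chr h A B C (z t)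
          * deriv (fun u => z u B) t * deriv (fun u => z u C) t = 0

/-- Index type of ℝ⁵ = ℝ⁴ × ℝ : the four spacetime directions plus the fibre direction `y`. -/
abbrev K5 := Sum (Fin 4) Unit

/-- Projection ℝ⁵ → ℝ⁴. -/
def projx (p : K5 → ℝ) : Fin 4 → ℝ := fun μ => p (Sum.inl μ)

/-- The Kaluza–Klein metric matrix built from `g`, `A`, `a`, conformal factor `Ω` and `β`:
`g̃_{μν} = Ω⁻²g_{μν} − a²β²A_μA_ν`, `g̃_{μy} = −a²βA_μ`, `g̃_{yy} = −a²`. -/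
noncomputable def KK (g : (Fin 4 → ℝ) → Matrix (Fin 4) (Fin 4) ℝ)
    (A : (Fin 4 → ℝ) → Fin 4 → ℝ) (a Ω : (Fin 4 → ℝ) → ℝ) (β : ℝ)
    (x : Fin 4 → ℝ) : Matrix K5 K5 ℝ :=
  Matrix.of fun i j =>
    match i, j with
    | Sum.inl μ, Sum.inl ν => ((Ω x)^2)⁻¹ * g x μ ν - (a x)^2 * β^2 * A x μ * A x ν
    | Sum.inl μ, Sum.inr _ => -((a x)^2) * β * A x μ
    | Sum.inr _, Sum.inl ν => -((a x)^2) * β * A x ν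
    | Sum.inr _, Sum.inr _ => -((a x)^2)

/-- The Kaluza–Klein metric as a (y-independent) field on ℝ⁵. -/
noncomputable def KKfield (g : (Fin 4 → ℝ) → Matrix (Fin 4) (Fin 4) ℝ)
    (A : (Fin 4 → ℝ) → Fin 4 → ℝ) (a Ω : (Fin 4 → ℝ) → ℝ) (β : ℝ) :
    (K5 → ℝ) → Matrix K5 K5 ℝ :=
  fun p => KK g A a Ω β (projx p)

/-- The quantity Q(t) = a(x(t))² (ẏ(t) + β A_μ(x(t)) ẋ^μ(t)) along a curve in ℝ⁵. -/
noncomputable def Qcharge (a : (Fin 4 → ℝ) → ℝ) (A : (Fin 4 → ℝ) → Fin 4 → ℝ)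
    (β : ℝ) (z : ℝ → K5 → ℝ) (t : ℝ) : ℝ :=
  (a (projx (z t)))^2 * (deriv (fun u => z u (Sum.inr ())) t
    + β * ∑ μ : Fin 4, A (projx (z t)) μ * deriv (fun u => z u (Sum.inl μ)) t)

/-- Electromagnetic field tensor F_{μν} = ∂_μ A_ν − ∂_ν A_μ. -/
noncomputable def Fem (A : (Fin 4 → ℝ) → Fin 4 → ℝ) (μ ν : Fin 4) (x : Fin 4 → ℝ) : ℝ :=
  pd (fun z => A z ν) μ x - pd (fun z => A z μ) ν x

/-- The conformal factor Ω_r(x) = (ε + r²/(β²a(x)²))^{1/2}. -/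
noncomputable def Omr (a : (Fin 4 → ℝ) → ℝ) (β ε r : ℝ) (x : Fin 4 → ℝ) : ℝ :=
  Real.sqrt (ε + r^2 / (β^2 * (a x)^2))

/-- The conformally rescaled metric g_r = Ω_r² g₀. -/
noncomputable def grmet (g₀ : (Fin 4 → ℝ) → Matrix (Fin 4) (Fin 4) ℝ)
    (a : (Fin 4 → ℝ) → ℝ) (β ε r : ℝ) (x : Fin 4 → ℝ) : Matrix (Fin 4) (Fin 4) ℝ :=
  (Omr a β ε r x)^2 • g₀ x

open Filter Topology in
theorem reparam_hasDerivAt {F f τ : ℝ → ℝ} {t c f' : ℝ} (hτ : HasStrictDerivAt τ c t) (hc : c ≠ 0)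
    (hF : ∀ᶠ s in 𝓝 t, F (τ s) = f s) (hf : HasDerivAt f f' t) :
    HasDerivAt F (f' / c) (τ t) := by
  have h1 := hτ.to_localInverse hc
  have hr : ∀ᶠ y in 𝓝 (τ t), τ (hτ.localInverse τ c t hc y) = y :=
    (hτ.hasStrictFDerivAt_equiv hc).eventually_right_inverse
  have hl : hτ.localInverse τ c t hc (τ t) = t :=
    (hτ.hasStrictFDerivAt_equiv hc).localInverse_apply_image
  have hcont : Tendsto (hτ.localInverse τ c t hc) (𝓝 (τ t)) (𝓝 t) := by
    have := h1.hasDerivAt.continuousAt.tendsto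
    rwa [hl] at this
  have h2 := hcont.eventually hF
  have h3 : HasDerivAt (fun y => f (hτ.localInverse τ c t hc y)) (f' * c⁻¹) (τ t) := by
    have hf' : HasDerivAt f f' (hτ.localInverse τ c t hc (τ t)) := by rwa [hl]
    exact hf'.comp (τ t) h1.hasDerivAt
  rw [div_eq_mul_inv]
  refine h3.congr_of_eventuallyEq ?_
  filter_upwards [hr, h2] with y hy1 hy2
  rw [← hy2, hy1]

theorem chain_pd {ι : Type*} [Fintype ι] [DecidableEq ι] {f : (ι → ℝ) → ℝ} {z : ℝ → ι → ℝ}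
    {v : ι → ℝ} {t : ℝ} (hf : DifferentiableAt ℝ f (z t))
    (hz : ∀ B, HasDerivAt (fun s => z s B) (v B) t) :
    HasDerivAt (fun s => f (z s)) (∑ B, pd f B (z t) * v B) t := by
  have hz' : HasDerivAt z v t := hasDerivAt_pi.2 hz
  have := hf.hasFDerivAt.comp_hasDerivAt t hz'
  refine this.congr_deriv ?_
  have hv : v = ∑ B, v B • (Pi.single B (1:ℝ) : ι → ℝ) := by
    ext i
    simp [Finset.sum_apply, Pi.single_apply]
  have hs : fderiv ℝ f (z t) v = fderiv ℝ f (z t) (∑ B, v B • (Pi.single B (1:ℝ) : ι → ℝ)) :=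
    congrArg _ hv
  rw [hs, map_sum]
  refine Finset.sum_congr rfl fun B _ => ?_
  rw [map_smul, smul_eq_mul, mul_comm]; rfl

theorem line_pd {ι : Type*} [Fintype ι] [DecidableEq ι] {f : (ι → ℝ) → ℝ} {x : ι → ℝ}
    (hf : DifferentiableAt ℝ f x) (μ : ι) :
    HasDerivAt (fun s : ℝ => f (x + s • Pi.single μ 1)) (pd f μ x) 0 :=
  hf.hasFDerivAt.hasLineDerivAt _

theorem lower_chr {ι : Type*} [Fintype ι] [DecidableEq ι] (h : (ι → ℝ) → Matrix ι ι ℝ)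
    (x : ι → ℝ) (hx : IsUnit (h x).det) (v : ι → ℝ) (D : ι) :
    ∑ l, h x D l * (∑ B, ∑ C, Chr h l B C x * v B * v C) =
      ∑ B, ∑ C, (pd (fun z => h z D C) B x) * v B * v C
        - (1/2) * ∑ B, ∑ C, pd (fun z => h z B C) D x * v B * v C := by
  have key : ∀ w : ι → ℝ, ∑ l, h x D l * ∑ ρ, (h x)⁻¹ l ρ * w ρ = w D := by
    intro w
    have : (h x).mulVec ((h x)⁻¹.mulVec w) = w := by
      rw [Matrix.mulVec_mulVec, Matrix.mul_nonsing_inv _ hx, Matrix.one_mulVec]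
    exact congrFun this D
  have e : ∀ l, (∑ B, ∑ C, Chr h l B C x * v B * v C) =
      ∑ ρ, (h x)⁻¹ l ρ * (∑ B, ∑ C, (1/2) * (pd (fun z => h z ρ C) B x
        + pd (fun z => h z ρ B) C x - pd (fun z => h z B C) ρ x) * v B * v C) := by
    intro l
    simp only [Chr, Finset.mul_sum, Finset.sum_mul]
    conv_lhs => enter [2, B]; rw [Finset.sum_comm]
    rw [Finset.sum_comm]
    refine Finset.sum_congr rfl fun ρ _ => ?_
    refine Finset.sum_congr rfl fun B _ => Finset.sum_congr rfl fun C _ => ?_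
    ring
  simp only [e]
  rw [key]
  have sw : ∑ B, ∑ C, pd (fun z => h z D B) C x * v B * v C =
      ∑ B, ∑ C, pd (fun z => h z D C) B x * v B * v C := by
    rw [Finset.sum_comm]
    refine Finset.sum_congr rfl fun B _ => Finset.sum_congr rfl fun C _ => ?_
    ring
  have : ∑ B, ∑ C, (1/2) * (pd (fun z => h z D C) B x
        + pd (fun z => h z D B) C x - pd (fun z => h z B C) D x) * v B * v C
      = (1/2) * (∑ B, ∑ C, pd (fun z => h z D C) B x * v B * v C)
        + (1/2) * (∑ B, ∑ C, pd (fun z => h z D B) C x * v B * v C)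
        - (1/2) * ∑ B, ∑ C, pd (fun z => h z B C) D x * v B * v C := by
    simp only [Finset.mul_sum, ← Finset.sum_add_distrib, ← Finset.sum_sub_distrib]
    refine Finset.sum_congr rfl fun B _ => Finset.sum_congr rfl fun C _ => ?_
    ring
  rw [this, sw]
  ring

/-- momentum derivative -/
theorem momentum_deriv {ι : Type*} [Fintype ι] [DecidableEq ι] {h : (ι → ℝ) → Matrix ι ι ℝ}
    {z : ℝ → ι → ℝ} {v : ℝ → ι → ℝ} {w : ι → ℝ} {t : ℝ}
    (hh : ∀ B C, DifferentiableAt ℝ (fun x => h x B C) (z t))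
    (hz : ∀ B, HasDerivAt (fun s => z s B) (v t B) t)
    (hv : ∀ B, HasDerivAt (fun s => v s B) (w B) t) (D : ι) :
    HasDerivAt (fun s => ∑ C, h (z s) D C * v s C)
      (∑ C, h (z t) D C * w C + ∑ B, ∑ C, pd (fun x => h x D C) B (z t) * v t B * v t C) t := by
  have := HasDerivAt.fun_sum (u := Finset.univ)
    (fun C _ => (chain_pd (hh D C) hz).mul (hv C))
  refine this.congr_deriv ?_
  rw [Finset.sum_add_distrib, add_comm]
  congr 1
  rw [Finset.sum_comm]
  refine Finset.sum_congr rfl fun C _ => ?_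
  rw [Finset.sum_mul]

theorem energy_line {ι : Type*} [Fintype ι] [DecidableEq ι] {h : (ι → ℝ) → Matrix ι ι ℝ}
    {x v : ι → ℝ} (hh : ∀ B C, DifferentiableAt ℝ (fun x => h x B C) x) (D : ι) :
    HasDerivAt (fun s : ℝ => ∑ B, ∑ C, h (x + s • Pi.single D 1) B C * v B * v C)
      (∑ B, ∑ C, pd (fun z => h z B C) D x * v B * v C) 0 := by
  refine HasDerivAt.fun_sum fun B _ => HasDerivAt.fun_sum fun C _ => ?_
  exact ((line_pd (hh B C) D).mul_const _).mul_const _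

theorem kk_energy (g₀ : (Fin 4 → ℝ) → Matrix (Fin 4) (Fin 4) ℝ)
    (A : (Fin 4 → ℝ) → Fin 4 → ℝ) (a : (Fin 4 → ℝ) → ℝ) (β : ℝ) (p v : K5 → ℝ) :
    ∑ B : K5, ∑ C : K5, KKfield g₀ A a (fun _ => 1) β p B C * v B * v C =
      ∑ μ, ∑ ν, g₀ (projx p) μ ν * v (Sum.inl μ) * v (Sum.inl ν)
      - (a (projx p))^2 * (v (Sum.inr ()) + β * ∑ μ, A (projx p) μ * v (Sum.inl μ))^2 := by
  simp only [Fintype.sum_sum_type, KKfield, KK, Matrix.of_apply, Fin.sum_univ_four,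
    Finset.univ_unique, Finset.sum_singleton, PUnit.default_eq_unit]
  ring

theorem kk_momentum (g₀ : (Fin 4 → ℝ) → Matrix (Fin 4) (Fin 4) ℝ)
    (A : (Fin 4 → ℝ) → Fin 4 → ℝ) (a : (Fin 4 → ℝ) → ℝ) (β : ℝ) (p v : K5 → ℝ) (α : Fin 4) :
    ∑ C : K5, KKfield g₀ A a (fun _ => 1) β p (Sum.inl α) C * v C =
      ∑ ν, g₀ (projx p) α ν * v (Sum.inl ν)
      + (-β * ((a (projx p))^2 * (v (Sum.inr ()) + β * ∑ μ, A (projx p) μ * v (Sum.inl μ))))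
        * A (projx p) α := by
  simp only [Fintype.sum_sum_type, KKfield, KK, Matrix.of_apply, Fin.sum_univ_four,
    Finset.univ_unique, Finset.sum_singleton, PUnit.default_eq_unit]
  ring

theorem kk_det (g₀ : (Fin 4 → ℝ) → Matrix (Fin 4) (Fin 4) ℝ)
    (A : (Fin 4 → ℝ) → Fin 4 → ℝ) (a : (Fin 4 → ℝ) → ℝ) (β : ℝ)
    (hginv : ∀ x, IsUnit (g₀ x).det) (hapos : ∀ x, 0 < a x) (p : K5 → ℝ) :
    IsUnit (KKfield g₀ A a (fun _ => 1) β p).det := by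
  rw [isUnit_iff_ne_zero]
  intro h0
  obtain ⟨v, hv, hMv⟩ := Matrix.exists_mulVec_eq_zero_iff.2 h0
  apply hv
  have hy := congrFun hMv (Sum.inr ())
  have hy' : -(a (projx p))^2 * (v (Sum.inr ()) + β * ∑ μ, A (projx p) μ * v (Sum.inl μ)) = 0 := by
    refine Eq.trans ?_ hy
    simp only [Matrix.mulVec, dotProduct, Fintype.sum_sum_type, KKfield, KK, Matrix.of_apply,
      Fin.sum_univ_four, Finset.univ_unique, Finset.sum_singleton, PUnit.default_eq_unit]
    ring
  have ha : -(a (projx p))^2 ≠ 0 := by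
    have := hapos (projx p)
    simp [this.ne']
  have hw := (mul_eq_zero.1 hy').resolve_left ha
  have hx : (g₀ (projx p)).mulVec (fun ν => v (Sum.inl ν)) = 0 := by
    ext α
    have hα := congrFun hMv (Sum.inl α)
    have := kk_momentum g₀ A a β p v α
    rw [hw] at this
    simp only [mul_zero, zero_mul, add_zero] at this
    exact this.symm.trans hα
  have hx0 : (fun ν => v (Sum.inl ν)) = 0 := by
    by_contra hne
    exact (hginv (projx p)).ne_zero (Matrix.exists_mulVec_eq_zero_iff.1 ⟨_, hne, hx⟩)
  have hxc : ∀ ν, v (Sum.inl ν) = 0 := fun ν => congrFun hx0 ν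
  have hyc : v (Sum.inr ()) = 0 := by simpa [hxc] using hw
  ext B
  rcases B with ν | u
  · exact hxc ν
  · exact hyc


theorem kk_diff {g₀ : (Fin 4 → ℝ) → Matrix (Fin 4) (Fin 4) ℝ}
    {A : (Fin 4 → ℝ) → Fin 4 → ℝ} {a : (Fin 4 → ℝ) → ℝ} (β : ℝ)
    (hg : ∀ μ ν, Differentiable ℝ (fun x => g₀ x μ ν))
    (hA : ∀ μ, Differentiable ℝ (fun x => A x μ)) (ha : Differentiable ℝ a) (B C : K5) :
    Differentiable ℝ (fun p => KKfield g₀ A a (fun _ => 1) β p B C) := by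
  have hp : Differentiable ℝ projx := by
    unfold projx; fun_prop
  have hg' : ∀ μ ν, Differentiable ℝ (fun p => g₀ (projx p) μ ν) := fun μ ν => (hg μ ν).comp hp
  have hA' : ∀ μ, Differentiable ℝ (fun p => A (projx p) μ) := fun μ => (hA μ).comp hp
  have ha' : Differentiable ℝ (fun p => a (projx p)) := ha.comp hp
  rcases B with μ | u <;> rcases C with ν | w <;>
    simp only [KKfield, KK, Matrix.of_apply] <;> fun_prop

theorem projx_line (p : K5 → ℝ) (s : ℝ) (α : Fin 4) :
    projx (p + s • Pi.single (Sum.inl α) 1) = projx p + s • Pi.single α 1 := by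
  ext μ
  simp [projx, Pi.single_apply]

/-- derivative of the KK energy in spacetime direction -/
theorem kk_energy_pd {g₀ : (Fin 4 → ℝ) → Matrix (Fin 4) (Fin 4) ℝ}
    {A : (Fin 4 → ℝ) → Fin 4 → ℝ} {a : (Fin 4 → ℝ) → ℝ} (β : ℝ)
    (hg : ∀ μ ν, Differentiable ℝ (fun x => g₀ x μ ν))
    (hA : ∀ μ, Differentiable ℝ (fun x => A x μ)) (ha : Differentiable ℝ a)
    (p v : K5 → ℝ) (α : Fin 4) :
    ∑ B, ∑ C, pd (fun z => KKfield g₀ A a (fun _ => 1) β z B C) (Sum.inl α) p * v B * v C =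
      ∑ μ, ∑ ν, pd (fun x => g₀ x μ ν) α (projx p) * v (Sum.inl μ) * v (Sum.inl ν)
      - (2 * a (projx p) * pd a α (projx p)
          * (v (Sum.inr ()) + β * ∑ μ, A (projx p) μ * v (Sum.inl μ))^2
        + (a (projx p))^2 * (2 * (v (Sum.inr ()) + β * ∑ μ, A (projx p) μ * v (Sum.inl μ))
          * (β * ∑ μ, pd (fun x => A x μ) α (projx p) * v (Sum.inl μ)))) := by
  have h1 := energy_line (h := KKfield g₀ A a (fun _ => 1) β) (x := p) (v := v)
    (fun B C => kk_diff β hg hA ha B C p) (Sum.inl α)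
  simp only [kk_energy, projx_line] at h1
  have hE := energy_line (h := g₀) (x := projx p) (v := fun μ => v (Sum.inl μ))
    (fun B C => hg B C _) α
  have hAl : HasDerivAt (fun s : ℝ => ∑ μ, A (projx p + s • Pi.single α 1) μ * v (Sum.inl μ))
      (∑ μ, pd (fun x => A x μ) α (projx p) * v (Sum.inl μ)) 0 :=
    HasDerivAt.fun_sum fun μ _ => (line_pd (hA μ _) α).mul_const _
  have hal := line_pd (ha (projx p)) α
  have h2 := hE.sub ((hal.pow 2).mul (((hAl.const_mul β).const_add (v (Sum.inr ()))).pow 2))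
  refine (h1.unique h2).trans ?_
  simp

theorem pd_mul' {ι : Type*} [Fintype ι] [DecidableEq ι] {f g : (ι → ℝ) → ℝ} {x : ι → ℝ}
    (hf : DifferentiableAt ℝ f x) (hg : DifferentiableAt ℝ g x) (μ : ι) :
    pd (fun y => f y * g y) μ x = pd f μ x * g x + f x * pd g μ x := by
  unfold pd
  rw [fderiv_fun_mul hf hg]
  simp
  ring

theorem final_algebra (G : Fin 4 → Fin 4 → ℝ) (dG : Fin 4 → Fin 4 → Fin 4 → ℝ)
    (dP X W : Fin 4 → ℝ) (F : Fin 4 → ℝ) (P r : ℝ) (k : Fin 4) (hP : P ≠ 0)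
    (hn : ∑ μ, ∑ ν, G μ ν * X μ * X ν = P)
    (hb : ∑ ν, G k ν * W ν + ∑ μ, ∑ ν, dG μ k ν * X μ * X ν
      - (1/2) * ∑ μ, ∑ ν, dG k μ ν * X μ * X ν = r * ∑ ν, F ν * X ν + (1/2) * dP k) :
    ∑ l, P * G k l * ((W l * P - X l * ∑ μ, dP μ * X μ) / P^2 / P)
      + (∑ μ, ∑ ν, (dP μ * G k ν + P * dG μ k ν) * (X μ / P) * (X ν / P)
        - (1/2) * ∑ μ, ∑ ν, (dP k * G μ ν + P * dG k μ ν) * (X μ / P) * (X ν / P))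
      = r * ∑ ν, F ν * (X ν / P) := by
  have e1 : ∑ l, P * G k l * ((W l * P - X l * ∑ μ, dP μ * X μ) / P^2 / P)
      = (1/P) * ∑ ν, G k ν * W ν - (1/P^2) * ((∑ μ, dP μ * X μ) * ∑ ν, G k ν * X ν) := by
    generalize ∑ μ, dP μ * X μ = c
    simp only [Finset.mul_sum, ← Finset.sum_sub_distrib]
    refine Finset.sum_congr rfl fun l _ => ?_
    field_simp
  have e2 : ∑ μ, ∑ ν, (dP μ * G k ν + P * dG μ k ν) * (X μ / P) * (X ν / P)
      = (1/P^2) * ((∑ μ, dP μ * X μ) * ∑ ν, G k ν * X ν)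
        + (1/P) * ∑ μ, ∑ ν, dG μ k ν * X μ * X ν := by
    rw [Finset.sum_mul_sum]
    simp only [Finset.mul_sum, ← Finset.sum_add_distrib]
    refine Finset.sum_congr rfl fun μ _ => Finset.sum_congr rfl fun ν _ => ?_
    field_simp
  have e3 : ∑ μ, ∑ ν, (dP k * G μ ν + P * dG k μ ν) * (X μ / P) * (X ν / P)
      = (dP k/P^2) * (∑ μ, ∑ ν, G μ ν * X μ * X ν)
        + (1/P) * ∑ μ, ∑ ν, dG k μ ν * X μ * X ν := by
    simp only [Finset.mul_sum, ← Finset.sum_add_distrib]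
    refine Finset.sum_congr rfl fun μ _ => Finset.sum_congr rfl fun ν _ => ?_
    field_simp
  have e4 : ∑ ν, F ν * (X ν / P) = (1/P) * ∑ ν, F ν * X ν := by
    simp only [Finset.mul_sum]
    refine Finset.sum_congr rfl fun ν _ => ?_
    field_simp
  rw [e1, e2, e3, e4, hn]
  have : dP k / P^2 * P = (1/P) * dP k := by field_simp
  rw [this]
  linear_combination (1/P) * hb

/-- the projected geodesic equation, lowered -/
theorem base_eq {g₀ : (Fin 4 → ℝ) → Matrix (Fin 4) (Fin 4) ℝ}
    {A : (Fin 4 → ℝ) → Fin 4 → ℝ} {a : (Fin 4 → ℝ) → ℝ} {β r : ℝ}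
    (hg : ∀ μ ν, Differentiable ℝ (fun x => g₀ x μ ν))
    (hginv : ∀ x, IsUnit (g₀ x).det)
    (hA : ∀ μ, Differentiable ℝ (fun x => A x μ)) (ha : Differentiable ℝ a)
    (hapos : ∀ x, 0 < a x) (hβ : β ≠ 0) {I : Set ℝ} (hI : IsOpen I) {z v : ℝ → K5 → ℝ}
    {w : K5 → ℝ} {t : ℝ} (ht : t ∈ I)
    (hz : ∀ B, HasDerivAt (fun s => z s B) (v t B) t)
    (hv : ∀ B, HasDerivAt (fun s => v s B) (w B) t)
    (hgeo : ∀ B, w B + ∑ C, ∑ D, Chr (KKfield g₀ A a (fun _ => 1) β) B C D (z t)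
      * v t C * v t D = 0)
    (hr : ∀ s ∈ I, r = -β * ((a (projx (z s)))^2 * (v s (Sum.inr ())
      + β * ∑ μ, A (projx (z s)) μ * v s (Sum.inl μ)))) (k : Fin 4) :
    ∑ ν, g₀ (projx (z t)) k ν * w (Sum.inl ν)
      + ∑ μ, ∑ ν, pd (fun x => g₀ x k ν) μ (projx (z t)) * v t (Sum.inl μ) * v t (Sum.inl ν)
      - (1/2) * ∑ μ, ∑ ν, pd (fun x => g₀ x μ ν) k (projx (z t))
        * v t (Sum.inl μ) * v t (Sum.inl ν)
      = r * ∑ ν, Fem A k ν (projx (z t)) * v t (Sum.inl ν)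
        + (1/2) * (-2 * r^2 / (β^2 * (a (projx (z t)))^3) * pd a k (projx (z t))) := by
  set x := projx (z t) with hx
  have hlow := lower_chr (KKfield g₀ A a (fun _ => 1) β) (z t)
    (kk_det g₀ A a β hginv hapos (z t)) (v t) (Sum.inl k)
  have hw : ∀ B, (∑ C, ∑ D, Chr (KKfield g₀ A a (fun _ => 1) β) B C D (z t)
      * v t C * v t D) = - w B := fun B => by linarith [hgeo B]
  simp only [hw] at hlow
  rw [kk_energy_pd β hg hA ha, ← hx] at hlow
  have hm := momentum_deriv (fun B C => kk_diff β hg hA ha B C (z t)) hz hv (Sum.inl k)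
  have hm2 : HasDerivAt (fun s => ∑ ν, g₀ (projx (z s)) k ν * v s (Sum.inl ν)
      + r * A (projx (z s)) k)
      ((∑ ν, g₀ x k ν * w (Sum.inl ν)
      + ∑ μ, ∑ ν, pd (fun x => g₀ x k ν) μ x * v t (Sum.inl μ) * v t (Sum.inl ν))
      + r * ∑ μ, pd (fun x => A x k) μ x * v t (Sum.inl μ)) t := by
    have hzx : ∀ μ, HasDerivAt (fun s => projx (z s) μ) (v t (Sum.inl μ)) t :=
      fun μ => hz (Sum.inl μ)
    have h1 := momentum_deriv (h := g₀) (z := fun s => projx (z s))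
      (v := fun s μ => v s (Sum.inl μ)) (w := fun μ => w (Sum.inl μ)) (t := t)
      (fun B C => hg B C _) hzx (fun μ => hv (Sum.inl μ)) k
    have h2 := chain_pd (z := fun s => projx (z s)) (v := fun μ => v t (Sum.inl μ)) (t := t)
      (hA k _) hzx
    exact h1.add (h2.const_mul r)
  have hm3 := hm2.congr_of_eventuallyEq (f₁ := fun s => ∑ C, KKfield g₀ A a (fun _ => 1) β (z s)
      (Sum.inl k) C * v s C) (by
    filter_upwards [hI.mem_nhds ht] with s hs
    rw [kk_momentum, ← hr s hs])
  have hE := hm.unique hm3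
  have hF : ∑ ν, Fem A k ν x * v t (Sum.inl ν) =
      ∑ μ, pd (fun x => A x μ) k x * v t (Sum.inl μ)
      - ∑ μ, pd (fun x => A x k) μ x * v t (Sum.inl μ) := by
    simp only [Fem, sub_mul, Finset.sum_sub_distrib]
  rw [hF]
  have hrt := hr t ht
  rw [← hx] at hrt
  simp only [mul_neg, Finset.sum_neg_distrib] at hlow
  have hap := (hapos x).ne'
  generalize v t (Sum.inr ()) + β * ∑ μ, A x μ * v t (Sum.inl μ) = q at *
  have hq : -2 * r^2 / (β^2 * (a x)^3) * pd a k x = - (2 * a x * pd a k x * q^2) := by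
    rw [hrt]; field_simp
  rw [hq]
  generalize ∑ μ, pd (fun x => A x μ) k x * v t (Sum.inl μ) = y1 at *
  generalize ∑ μ, pd (fun x => A x k) μ x * v t (Sum.inl μ) = y2 at *
  linear_combination -hE - hlow - y1 * hrt
/-- Theorem 1, main part: the projection of a geodesic of the Kaluza–Klein
metric, reparametrized by `τ` with `dτ/dt = Ω_r(x(t))²`, satisfies the Lorentz force
equation for the metric `g_r = Ω_r² g₀` with the normalization `g_r(xr', xr') = 1`. -/
theorem kk_geodesic_projects_to_lorentz_force
    (g₀ : (Fin 4 → ℝ) → Matrix (Fin 4) (Fin 4) ℝ)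
    (A : (Fin 4 → ℝ) → Fin 4 → ℝ) (a : (Fin 4 → ℝ) → ℝ) (β : ℝ)
    (hg : ∀ μ ν, ContDiff ℝ (⊤ : ℕ∞) (fun x => g₀ x μ ν))
    (hgsymm : ∀ x, (g₀ x).IsSymm)
    (hginv : ∀ x, IsUnit (g₀ x).det)
    (hA : ∀ μ, ContDiff ℝ (⊤ : ℕ∞) (fun x => A x μ))
    (ha : ContDiff ℝ (⊤ : ℕ∞) a) (hapos : ∀ x, 0 < a x)
    (hβ : β ≠ 0)
    (ε : ℝ) (hε : ε = -1 ∨ ε = 0 ∨ ε = 1)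
    (I : Set ℝ) (hI : IsOpen I) (hIconn : I.OrdConnected)
    (z : ℝ → K5 → ℝ)
    (hz : ∀ B : K5, ContDiffOn ℝ (⊤ : ℕ∞) (fun t => z t B) I)
    -- z is a geodesic of the Kaluza–Klein metric g̃ (with Ω ≡ 1)
    (hgeo : IsGeodesicOn (KKfield g₀ A a (fun _ => 1) β) z I)
    -- normalization g̃(ż, ż) = ε
    (hnorm : ∀ t ∈ I, ∑ B : K5, ∑ C : K5,
      KKfield g₀ A a (fun _ => 1) β (z t) B C
        * deriv (fun u => z u B) t * deriv (fun u => z u C) t = ε)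
    -- r is the conserved charge r = −β a² (ẏ + β A_μ ẋ^μ)
    (r : ℝ) (hr : ∀ t ∈ I, r = -β * Qcharge a A β z t)
    -- positivity of ε + r²/(β²a²) along the projected curve
    (hpos : ∀ t ∈ I, 0 < ε + r^2 / (β^2 * (a (projx (z t)))^2))
    -- τ is the reparametrization with dτ/dt = Ω_r(x(t))²
    (τ : ℝ → ℝ) (hτ : ∀ t ∈ I, HasDerivAt τ ((Omr a β ε r (projx (z t)))^2) t)
    -- xr is the projected curve reparametrized by τ
    (xr : ℝ → Fin 4 → ℝ) (hxr : ∀ t ∈ I, ∀ μ : Fin 4, xr (τ t) μ = z t (Sum.inl μ)) :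
    ∀ t ∈ I,
      (∀ l : Fin 4,
        deriv (fun s => deriv (fun u => xr u l) s) (τ t)
          + ∑ μ : Fin 4, ∑ ν : Fin 4, Chr (grmet g₀ a β ε r) l μ ν (xr (τ t))
              * deriv (fun u => xr u μ) (τ t) * deriv (fun u => xr u ν) (τ t)
        = r * ∑ α : Fin 4, (grmet g₀ a β ε r (xr (τ t)))⁻¹ l α
              * ∑ ν : Fin 4, Fem A α ν (xr (τ t)) * deriv (fun u => xr u ν) (τ t)) ∧
      (∑ μ : Fin 4, ∑ ν : Fin 4, grmet g₀ a β ε r (xr (τ t)) μ ν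
          * deriv (fun u => xr u μ) (τ t) * deriv (fun u => xr u ν) (τ t) = 1) := by
  have hg' : ∀ μ ν, Differentiable ℝ (fun x => g₀ x μ ν) := fun μ ν =>
    (hg μ ν).differentiable (by simp)
  have hA' : ∀ μ, Differentiable ℝ (fun x => A x μ) := fun μ => (hA μ).differentiable (by simp)
  have ha' : Differentiable ℝ a := ha.differentiable (by simp)
  set v : ℝ → K5 → ℝ := fun s B => deriv (fun u => z u B) s with hvdef
  have hzd : ∀ t ∈ I, ∀ B, HasDerivAt (fun s => z s B) (v t B) t := fun t ht B =>
    (((hz B).differentiableOn (by simp)).differentiableAt (hI.mem_nhds ht)).hasDerivAt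
  have hvd : ∀ t ∈ I, ∀ B, HasDerivAt (fun s => v s B) (deriv (fun s => v s B) t) t :=
    fun t ht B =>
    ((((hz B).deriv_of_isOpen (m := 1) hI (by norm_cast)).differentiableOn
      (by simp)).differentiableAt (hI.mem_nhds ht)).hasDerivAt
  set Φ : (Fin 4 → ℝ) → ℝ := fun x => ε + r^2 / (β^2 * (a x)^2) with hΦ
  have hane : ∀ x, a x ≠ 0 := fun x => (hapos x).ne'
  have hΦd : Differentiable ℝ Φ := by
    have : ∀ x, β^2 * (a x)^2 ≠ 0 := fun x => by simp [hβ, hane x]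
    intro x
    exact (((ha' x).pow 2).const_mul _ |> fun h => (h.inv (this x)).const_mul (r^2)
      |>.const_add ε)
  have hOm : ∀ x, 0 ≤ Φ x → (Omr a β ε r x)^2 = Φ x := fun x hx => Real.sq_sqrt hx
  have hpΦ : ∀ k x, pd Φ k x = -2 * r^2 / (β^2 * (a x)^3) * pd a k x := by
    intro k x
    have h1 := line_pd (hΦd x) k
    have h2 := line_pd (ha' x) k
    have hb : β^2 * (a (x + (0:ℝ) • Pi.single k 1))^2 ≠ 0 := by simp [hβ, hane x]
    have h3 := (((((h2.pow 2).const_mul (β^2)).inv hb).const_mul (r^2)).const_add ε)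
    refine (h1.unique h3).trans ?_
    have := hane x
    simp
    field_simp
  -- first derivatives
  have hzx : ∀ t ∈ I, ∀ μ, HasDerivAt (fun s => projx (z s) μ) (v t (Sum.inl μ)) t :=
      fun t ht μ => hzd t ht (Sum.inl μ)
  have hΦz : ∀ t ∈ I, HasDerivAt (fun s => Φ (projx (z s)))
      (∑ μ, pd Φ μ (projx (z t)) * v t (Sum.inl μ)) t := fun t ht =>
    chain_pd (z := fun s => projx (z s)) (v := fun μ => v t (Sum.inl μ)) (hΦd _) (hzx t ht)
  have hpos' : ∀ t ∈ I, 0 < Φ (projx (z t)) := hpos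
  have hτs : ∀ t ∈ I, HasStrictDerivAt τ (Φ (projx (z t))) t := by
    intro t ht
    refine hasStrictDerivAt_of_hasDerivAt_of_continuousAt (f' := fun s => Φ (projx (z s))) ?_
      (hΦz t ht).continuousAt
    filter_upwards [hI.mem_nhds ht] with s hs
    rw [← hOm _ (hpos' s hs).le]
    exact hτ s hs
  have hx1 : ∀ t ∈ I, ∀ μ, deriv (fun u => xr u μ) (τ t) = v t (Sum.inl μ) / Φ (projx (z t)) := by
    intro t ht μ
    refine (reparam_hasDerivAt (hτs t ht) (hpos' t ht).ne' ?_ (hzd t ht (Sum.inl μ))).deriv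
    filter_upwards [hI.mem_nhds ht] with s hs
    exact hxr s hs μ
  intro t ht
  have hP := hpos' t ht
  have hx2 : ∀ μ, deriv (fun s => deriv (fun u => xr u μ) s) (τ t) =
      (deriv (fun s => v s (Sum.inl μ)) t * Φ (projx (z t)) - v t (Sum.inl μ) *
        ∑ ν, pd Φ ν (projx (z t)) * v t (Sum.inl ν)) / Φ (projx (z t))^2 / Φ (projx (z t)) := by
    intro μ
    refine (reparam_hasDerivAt (hτs t ht) hP.ne' ?_
      ((hvd t ht (Sum.inl μ)).div (hΦz t ht) hP.ne')).deriv
    filter_upwards [hI.mem_nhds ht] with s hs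
    exact hx1 s hs μ
  have hxt : xr (τ t) = projx (z t) := funext fun μ => hxr t ht μ
  simp only [hx1 t ht, hx2, hxt]
  have hQ : ∀ s ∈ I, r = -β * ((a (projx (z s)))^2 * (v s (Sum.inr ())
      + β * ∑ μ, A (projx (z s)) μ * v s (Sum.inl μ))) := hr
  have hgm : ∀ μ ν, grmet g₀ a β ε r (projx (z t)) μ ν
      = Φ (projx (z t)) * g₀ (projx (z t)) μ ν := by
    intro μ ν
    simp only [grmet, Matrix.smul_apply, smul_eq_mul]
    rw [hOm _ hP.le]
  have hgp : ∀ μ ν k, pd (fun x => grmet g₀ a β ε r x μ ν) k (projx (z t)) =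
      pd Φ k (projx (z t)) * g₀ (projx (z t)) μ ν
        + Φ (projx (z t)) * pd (fun x => g₀ x μ ν) k (projx (z t)) := by
    intro μ ν k
    rw [← pd_mul' (hΦd _) (hg' μ ν _)]
    unfold pd
    refine congrArg (fun L : (Fin 4 → ℝ) →L[ℝ] ℝ => L (Pi.single k 1))
      (Filter.EventuallyEq.fderiv_eq ?_)
    filter_upwards [(hΦd _).continuousAt.eventually (lt_mem_nhds hP)] with y hy
    simp only [grmet, Matrix.smul_apply, smul_eq_mul]
    rw [hOm _ (le_of_lt hy)]
  have hn : ∑ μ, ∑ ν, g₀ (projx (z t)) μ ν * v t (Sum.inl μ) * v t (Sum.inl ν)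
      = Φ (projx (z t)) := by
    have h1 := hnorm t ht
    have h2 := kk_energy g₀ A a β (z t) (v t)
    have h3 := h2.symm.trans h1
    have h4 := hQ t ht
    have := hane (projx (z t))
    generalize v t (Sum.inr ()) + β * ∑ μ, A (projx (z t)) μ * v t (Sum.inl μ) = q at *
    have h5 : Φ (projx (z t)) = ε + (a (projx (z t)))^2 * q^2 := by
      simp only [hΦ]
      rw [h4]; field_simp
    rw [h5]; linarith
  have hdet : IsUnit (grmet g₀ a β ε r (projx (z t))).det := by
    simp only [grmet]
    rw [hOm _ hP.le, Matrix.det_smul]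
    exact (IsUnit.mk0 _ (pow_ne_zero _ hP.ne')).mul (hginv _)
  refine ⟨?_, ?_⟩
  · set M := grmet g₀ a β ε r (projx (z t)) with hM
    set L : Fin 4 → ℝ := fun l => (deriv (fun s => v s (Sum.inl l)) t * Φ (projx (z t))
        - v t (Sum.inl l) *
        ∑ ν, pd Φ ν (projx (z t)) * v t (Sum.inl ν)) / Φ (projx (z t))^2 / Φ (projx (z t)) with hL
    set K : Fin 4 → ℝ := fun l => ∑ μ, ∑ ν, Chr (grmet g₀ a β ε r) l μ ν (projx (z t))
              * (v t (Sum.inl μ) / Φ (projx (z t))) * (v t (Sum.inl ν) / Φ (projx (z t))) with hK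
    set f : Fin 4 → ℝ := fun α => ∑ ν, Fem A α ν (projx (z t))
      * (v t (Sum.inl ν) / Φ (projx (z t))) with hf
    have key : M.mulVec (L + K) = r • f := by
      ext k
      have hb := base_eq hg' hginv hA' ha' hapos hβ hI ht (hzd t ht) (hvd t ht)
        (fun B => hgeo t ht B) hQ k
      rw [← hpΦ] at hb
      have hfin := final_algebra (fun μ ν => g₀ (projx (z t)) μ ν)
        (fun k μ ν => pd (fun x => g₀ x μ ν) k (projx (z t))) (fun k => pd Φ k (projx (z t)))
        (fun μ => v t (Sum.inl μ)) (fun μ => deriv (fun s => v s (Sum.inl μ)) t)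
        (fun ν => Fem A k ν (projx (z t))) (Φ (projx (z t))) r k hP.ne' hn hb
      have hlow := lower_chr (grmet g₀ a β ε r) (projx (z t)) hdet
        (fun μ => v t (Sum.inl μ) / Φ (projx (z t))) k
      simp only [hgp] at hlow
      rw [Matrix.mulVec_add]
      simp only [Pi.add_apply, Pi.smul_apply, smul_eq_mul, hf]
      rw [← hfin, ← hlow]
      simp only [hM] at hgm
      simp only [Matrix.mulVec, dotProduct, hL, hK, hM, hgm]
    have h2 : L + K = r • M⁻¹.mulVec f := by
      rw [← Matrix.mulVec_smul, ← key, Matrix.mulVec_mulVec, Matrix.nonsing_inv_mul _ hdet,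
        Matrix.one_mulVec]
    intro l
    exact congrFun h2 l
  · simp only [hgm]
    have : ∑ μ, ∑ ν, Φ (projx (z t)) * g₀ (projx (z t)) μ ν * (v t (Sum.inl μ) / Φ (projx (z t)))
        * (v t (Sum.inl ν) / Φ (projx (z t))) = (1 / Φ (projx (z t))) *
        ∑ μ, ∑ ν, g₀ (projx (z t)) μ ν * v t (Sum.inl μ) * v t (Sum.inl ν) := by
      have := hP.ne'
      generalize Φ (projx (z t)) = P at *
      simp only [Finset.mul_sum]
      refine Finset.sum_congr rfl fun μ _ => Finset.sum_congr rfl fun ν _ => ?_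
      field_simp
    rw [this, hn]
    field_simp
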